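/- Let T = {1243, 1423, 2341} (patterns of length 4). Then the generating function for T-avoiders satisfies, as formal power series over ℚ, (x·C(x) - (x-1)^2)·(x-1)^2·(2x-1)·F_T(x) = x·(x-1)^2·(2x-1)·C(x) + (3x^4 - 7x^3 + 9x^2 - 5x + 1), where C(x) is the Catalan number generating function. -/

import Mathlib

open PowerSeries

/-- A permutation `π` of `{0,…,n-1}` contains the pattern `σ` (of length `k`) if there is an
order-embedding of positions on which the values of `π` appear in the same relative order as
the values of `σ`. -/
def ContainsPattern {n k : ℕ} (π : Equiv.Perm (Fin n)) (σ : Fin k → Fin k) : Prop :=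
  ∃ f : Fin k ↪o Fin n, ∀ a b : Fin k, σ a < σ b ↔ π (f a) < π (f b)

/-- The number of permutations of length `n` avoiding every pattern in `T`. -/
noncomputable def avoiderCount (T : Set (Fin 4 → Fin 4)) (n : ℕ) : ℕ :=
  Nat.card {π : Equiv.Perm (Fin n) // ∀ σ ∈ T, ¬ ContainsPattern π σ}

/-- The generating function `F_T(x) = ∑_n |S_n(T)| xⁿ` over `ℚ`. -/
noncomputable def avoiderGF (T : Set (Fin 4 → Fin 4)) : PowerSeries ℚ :=
  PowerSeries.mk fun n => (avoiderCount T n : ℚ)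

/-- The generating function of the Catalan numbers over `ℚ`. -/
noncomputable def catalanGF : PowerSeries ℚ :=
  PowerSeries.mk fun n => (catalan n : ℚ)

/-!
Reverse-complementing turns the three patterns into 2134, 2314 and 4123. The avoiders of these grow
by inserting a new largest letter, which can only play the role of 4: insertion at position `i` is
allowed exactly if the letters before `i` avoid 213 and 231 and those from `i` on avoid 123. The
allowed positions form an interval, and in a prefix avoiding 213 and 231 each letter is lower or
higher than all later ones. How lows and highs are arranged within the interval determines the
number of children and the arrangement for each child, so it labels a generating tree. The
generating functions below the labels satisfy a linear system, which is solved by powers of `C` and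
`D = 1 / (1 - x)`: since `x C ^ (j + 2) = C ^ (j + 1) - C ^ j` and
`x D ^ (j + 1) = D ^ (j + 1) - D ^ j`, all its sums telescope.
-/

/-- The word obtained from `p` by inserting the letter `m` at position `i`; a word of length `n`
is a function on `ℕ` of which only the values below `n` matter. -/
def insertAt (p : ℕ → ℕ) (i m : ℕ) : ℕ → ℕ :=
  fun j => if j < i then p j else if j = i then m else p (j - 1)

/-- The position in `insertAt p i m` of the letter at position `x` of `p`: the analogue on `ℕ` of
`Fin.succAbove`. -/
def skip (i x : ℕ) : ℕ := if x < i then x else x + 1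

section Insertion

variable {p : ℕ → ℕ} {i j m x y c : ℕ}

lemma insertAt_self : insertAt p i m i = m := by simp [insertAt]

lemma insertAt_of_lt (h : j < i) : insertAt p i m j = p j := by simp [insertAt, h]

lemma insertAt_skip : insertAt p i m (skip i x) = p x := by grind [insertAt, skip]

lemma eq_or_eq_skip (i y : ℕ) : i = y ∨ ∃ x, y = skip i x := by
  rcases lt_trichotomy y i with h | h | h
  · exact .inr ⟨y, by simp [skip, h]⟩
  · exact .inl h.symm
  · exact .inr ⟨y - 1, by grind [skip]⟩

lemma skip_lt_skip : skip i x < skip i y ↔ x < y := by grind [skip]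

lemma skip_lt_self : skip i x < i ↔ x < i := by grind [skip]

lemma self_lt_skip : i < skip i x ↔ i ≤ x := by grind [skip]

lemma skip_lt_succ (h : i ≤ c) : skip i x < c + 1 ↔ x < c := by grind [skip]

lemma le_skip (h : c ≤ i) : c ≤ skip i x ↔ c ≤ x := by grind [skip]

lemma insertAt_lt_succ {n : ℕ} (hi : i ≤ n) (hp : ∀ j < n, p j < n) :
    ∀ j < n + 1, insertAt p i n j < n + 1 := by
  intro j hj
  rcases eq_or_eq_skip i j with rfl | ⟨x, rfl⟩
  · rw [insertAt_self]
    exact n.lt_succ_self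
  · rw [insertAt_skip]
    exact (hp x ((skip_lt_succ hi).1 hj)).trans n.lt_succ_self

end Insertion

/-- The word `p` of length `n` avoids the patterns 2134, 2314 and 4123. -/
def AvoidsWord (n : ℕ) (p : ℕ → ℕ) : Prop :=
  ∀ w x y z, w < x → x < y → y < z → z < n →
    ¬ (p x < p w ∧ p w < p y ∧ p y < p z) ∧ ¬ (p y < p w ∧ p w < p x ∧ p x < p z) ∧
    ¬ (p x < p y ∧ p y < p z ∧ p z < p w)

/-- The first `b` letters of `p` avoid the patterns 213 and 231. -/
def PrefixAvoids (p : ℕ → ℕ) (b : ℕ) : Prop :=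
  ∀ x y z, x < y → y < z → z < b → ¬ (p y < p x ∧ p x < p z) ∧ ¬ (p z < p x ∧ p x < p y)

/-- The letters of the word `p` of length `n` from position `a` on avoid the pattern 123. -/
def SuffixAvoids (n : ℕ) (p : ℕ → ℕ) (a : ℕ) : Prop :=
  ∀ x y z, a ≤ x → x < y → y < z → z < n → ¬ (p x < p y ∧ p y < p z)

/-- Position `i` of the word `p` is an active site: a new largest letter inserted there creates
none of the patterns 2134, 2314 and 4123. -/
def IsActiveSite (n : ℕ) (p : ℕ → ℕ) (i : ℕ) : Prop :=
  PrefixAvoids p i ∧ SuffixAvoids n p i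

section Avoidance

variable {p : ℕ → ℕ} {n i a b c : ℕ}

lemma PrefixAvoids.mono (h : PrefixAvoids p b) (hc : c ≤ b) : PrefixAvoids p c :=
  fun x y z hxy hyz hz => h x y z hxy hyz (hz.trans_le hc)

lemma SuffixAvoids.mono (h : SuffixAvoids n p a) (hc : a ≤ c) : SuffixAvoids n p c :=
  fun x y z hx => h x y z (hc.trans hx)

lemma AvoidsWord.of_insertAt (hi : i ≤ n) (h : AvoidsWord (n + 1) (insertAt p i n)) :
    AvoidsWord n p := by
  intro w x y z hwx hxy hyz hz
  simpa only [insertAt_skip] using h (skip i w) (skip i x) (skip i y) (skip i z)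
    (skip_lt_skip.2 hwx) (skip_lt_skip.2 hxy) (skip_lt_skip.2 hyz) ((skip_lt_succ hi).2 hz)

lemma AvoidsWord.isActiveSite (hi : i ≤ n) (hp : ∀ j < n, p j < n)
    (h : AvoidsWord (n + 1) (insertAt p i n)) : IsActiveSite n p i := by
  constructor
  · intro x y z hxy hyz hz
    have := h x y z i hxy hyz hz (by omega)
    rw [insertAt_of_lt (by omega), insertAt_of_lt (by omega), insertAt_of_lt hz,
      insertAt_self] at this
    have := hp y (by omega)
    have := hp z (by omega)
    omega
  · intro x y z hx hxy hyz hz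
    have := h i (skip i x) (skip i y) (skip i z) (self_lt_skip.2 hx) (skip_lt_skip.2 hxy)
      (skip_lt_skip.2 hyz) ((skip_lt_succ hi).2 hz)
    simp only [insertAt_skip, insertAt_self] at this
    have := hp z hz
    omega

/-- The new letter is the largest, so it can only play the role of the letter 4. -/
lemma AvoidsWord.insertAt_of_isActiveSite (hi : i ≤ n) (hp : ∀ j < n, p j < n)
    (h : AvoidsWord n p) (hsite : IsActiveSite n p i) : AvoidsWord (n + 1) (insertAt p i n) := by
  intro w x y z hwx hxy hyz hz
  rcases eq_or_eq_skip i w with rfl | ⟨w, rfl⟩ <;>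
  rcases eq_or_eq_skip i x with rfl | ⟨x, rfl⟩ <;>
  rcases eq_or_eq_skip i y with rfl | ⟨y, rfl⟩ <;>
  rcases eq_or_eq_skip i z with rfl | ⟨z, rfl⟩ <;>
  simp only [skip_lt_skip, skip_lt_self, self_lt_skip, skip_lt_succ hi, insertAt_skip,
    insertAt_self, lt_self_iff_false] at hwx hxy hyz hz ⊢
  any_goals omega
  · have := hsite.2 x y z hwx hxy hyz hz
    have := hp y (by omega)
    have := hp z hz
    omega
  · have := hp w (by omega)
    have := hp y (by omega)
    have := hp z hz
    omega
  · have := hp w (by omega)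
    have := hp x (by omega)
    have := hp z hz
    omega
  · have := hp w (by omega)
    have := hsite.1 w x y hwx hxy hyz
    omega
  · exact h w x y z hwx hxy hyz hz

lemma avoidsWord_insertAt (hi : i ≤ n) (hp : ∀ j < n, p j < n) :
    AvoidsWord (n + 1) (insertAt p i n) ↔ AvoidsWord n p ∧ IsActiveSite n p i :=
  ⟨fun h => ⟨h.of_insertAt hi, h.isActiveSite hi hp⟩,
    fun h => h.1.insertAt_of_isActiveSite hi hp h.2⟩

lemma PrefixAvoids.of_insertAt (hi : i ≤ c) (h : PrefixAvoids (insertAt p i n) (c + 1)) :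
    PrefixAvoids p c := by
  intro x y z hxy hyz hz
  simpa only [insertAt_skip] using h (skip i x) (skip i y) (skip i z) (skip_lt_skip.2 hxy)
    (skip_lt_skip.2 hyz) ((skip_lt_succ hi).2 hz)

lemma PrefixAvoids.le_of_insertAt (hi : i ≤ c) (hcn : c ≤ n) (hp : ∀ j < n, p j < n)
    (h : PrefixAvoids (insertAt p i n) (c + 1)) {x y : ℕ} (hx : x < i) (hxy : x < y)
    (hy : y < c) : p x ≤ p y := by
  have hpx := hp x (by omega)
  rcases lt_or_ge y i with hyi | hyi
  · have := (h x y i hxy hyi (by omega)).1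
    rw [insertAt_of_lt hyi, insertAt_of_lt hx, insertAt_self] at this
    omega
  · have := (h x i (skip i y) hx (self_lt_skip.2 hyi) ((skip_lt_succ hi).2 hy)).2
    rw [insertAt_of_lt hx, insertAt_skip, insertAt_self] at this
    omega

lemma suffixAvoids_insertAt (hc : c ≤ i) (hi : i ≤ n) (hp : ∀ j < n, p j < n) :
    SuffixAvoids (n + 1) (insertAt p i n) c ↔
      SuffixAvoids n p c ∧ ∀ x y, c ≤ x → x < y → y < i → p y ≤ p x := by
  constructor
  · refine fun h => ⟨fun x y z hx hxy hyz hz => ?_, fun x y hx hxy hy => ?_⟩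
    · simpa only [insertAt_skip] using h (skip i x) (skip i y) (skip i z) ((le_skip hc).2 hx)
        (skip_lt_skip.2 hxy) (skip_lt_skip.2 hyz) ((skip_lt_succ hi).2 hz)
    · have := h x y i hx hxy hy (by omega)
      rw [insertAt_of_lt hy, insertAt_of_lt (by omega), insertAt_self] at this
      have := hp y (by omega)
      omega
  · rintro ⟨hsuf, hdec⟩ x y z hx hxy hyz hz
    rcases eq_or_eq_skip i x with rfl | ⟨x, rfl⟩ <;>
    rcases eq_or_eq_skip i y with rfl | ⟨y, rfl⟩ <;>
    rcases eq_or_eq_skip i z with rfl | ⟨z, rfl⟩ <;>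
    simp only [skip_lt_skip, skip_lt_self, self_lt_skip, skip_lt_succ hi, le_skip hc,
      insertAt_skip, insertAt_self, lt_self_iff_false] at hx hxy hyz hz ⊢
    any_goals omega
    · have := hp y (by omega)
      have := hp z hz
      omega
    · have := hp z hz
      omega
    · have := hdec x y hx hxy hyz
      omega
    · exact hsuf x y z hx hxy hyz hz

end Avoidance

/-- Each of the first `b` letters of `p` is smaller than all later ones among them if its position
lies in `L`, and larger than all of them otherwise. The last letter is both, so whether
`b - 1 ∈ L` is immaterial. If the letters are distinct, such an `L` exists exactly for the prefixes
avoiding 213 and 231. -/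
structure PrefixShape (p : ℕ → ℕ) (b : ℕ) (L : Set ℕ) : Prop where
  low : ∀ x ∈ L, ∀ y, x < y → y < b → p x < p y
  high : ∀ x ∉ L, ∀ y, x < y → y < b → p y < p x

namespace PrefixShape

variable {p : ℕ → ℕ} {b c i m : ℕ} {L L' : Set ℕ}

lemma prefixAvoids (h : PrefixShape p b L) : PrefixAvoids p b := by
  intro x y z hxy hyz hz
  by_cases hx : x ∈ L
  · have := h.low x hx y hxy (hyz.trans hz)
    have := h.low x hx z (hxy.trans hyz) hz
    omega
  · have := h.high x hx y hxy (hyz.trans hz)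
    have := h.high x hx z (hxy.trans hyz) hz
    omega

lemma restrict (h : PrefixShape p b L) (hc : c ≤ b) (hL : ∀ x, x + 1 < c → (x ∈ L ↔ x ∈ L')) :
    PrefixShape p c L' where
  low x hx y hxy hy := h.low x ((hL x (by omega)).2 hx) y hxy (hy.trans_le hc)
  high x hx y hxy hy := h.high x (mt (hL x (by omega)).1 hx) y hxy (hy.trans_le hc)

lemma insertAt_prefix (h : PrefixShape p b L) (hi : i ≤ b) :
    PrefixShape (insertAt p i m) i L where
  low x hx y hxy hy := by
    rw [insertAt_of_lt hy, insertAt_of_lt (hxy.trans hy)]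
    exact h.low x hx y hxy (hy.trans_le hi)
  high x hx y hxy hy := by
    rw [insertAt_of_lt hy, insertAt_of_lt (hxy.trans hy)]
    exact h.high x hx y hxy (hy.trans_le hi)

lemma insertAt_max (h : PrefixShape p b L) (hi : i ≤ b) (hm : ∀ j < b, p j < m)
    (hlow : ∀ x < i, x ∈ L) :
    PrefixShape (insertAt p i m) (b + 1) {x | x < i ∨ i < x ∧ x - 1 ∈ L} := by
  have mem_skip : ∀ x, skip i x ∈ {x | x < i ∨ i < x ∧ x - 1 ∈ L} ↔ x ∈ L := by
    intro x
    by_cases hx : x < i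
    · simp [skip, hx, hlow x hx]
    · simp [skip, hx, Nat.lt_succ_of_le (not_lt.1 hx), show ¬ x + 1 < i by omega]
  constructor <;> intro x hx y hxy hy
  · rcases eq_or_eq_skip i x with rfl | ⟨x, rfl⟩
    · simp at hx
    rcases eq_or_eq_skip i y with rfl | ⟨y, rfl⟩
    · rw [insertAt_skip, insertAt_self]
      exact hm x ((skip_lt_succ hi).1 (hxy.trans hy))
    · rw [insertAt_skip, insertAt_skip]
      exact h.low x ((mem_skip x).1 hx) y (skip_lt_skip.1 hxy) ((skip_lt_succ hi).1 hy)
  · rcases eq_or_eq_skip i y with rfl | ⟨y, rfl⟩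
    · exact absurd (.inl hxy) hx
    rcases eq_or_eq_skip i x with rfl | ⟨x, rfl⟩
    · rw [insertAt_skip, insertAt_self]
      exact hm y ((skip_lt_succ hi).1 hy)
    · rw [insertAt_skip, insertAt_skip]
      exact h.high x (mt (mem_skip x).2 hx) y (skip_lt_skip.1 hxy) ((skip_lt_succ hi).1 hy)

end PrefixShape

/-- The active sites of the word `p` of length `n`, with letters less than `n`, are exactly the
positions from `a` to `b`, and its first `b` letters have shape `L`. -/
structure Profile (n : ℕ) (p : ℕ → ℕ) (a b : ℕ) (L : Set ℕ) : Prop where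
  lt_length : ∀ j < n, p j < n
  le : a ≤ b
  le_length : b ≤ n
  shape : PrefixShape p b L
  prefix_maximal : b < n → ¬ PrefixAvoids p (b + 1)
  suffixAvoids : SuffixAvoids n p a
  suffix_maximal : 0 < a → ¬ SuffixAvoids n p (a - 1)

namespace Profile

variable {n : ℕ} {p : ℕ → ℕ} {a b i c a' b' : ℕ} {L L' : Set ℕ}

lemma isActiveSite_iff (h : Profile n p a b L) (hi : i ≤ n) :
    IsActiveSite n p i ↔ a ≤ i ∧ i ≤ b := by
  refine ⟨fun ⟨hpre, hsuf⟩ => ⟨?_, ?_⟩, fun ⟨hai, hib⟩ =>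
    ⟨h.shape.prefixAvoids.mono hib, h.suffixAvoids.mono hai⟩⟩
  · by_contra hia
    exact h.suffix_maximal (by omega) (hsuf.mono (by omega))
  · by_contra hbi
    exact h.prefix_maximal (by omega) (hpre.mono (by omega))

lemma congr (h : Profile n p a b L) (hb : b = b')
    (hL : ∀ x, x + 1 < b → (x ∈ L ↔ x ∈ L')) : Profile n p a b' L' := by
  subst hb
  exact { h with shape := h.shape.restrict le_rfl hL }

/-- A low letter just before the site starts an ascent, which the new letter completes to 123. -/
lemma suffix_maximal_insertAt (h : Profile n p a b L) (hi : i ≤ b) (hai : a' ≤ i)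
    (ha' : a' = a ∨ ∃ x ∈ L, a' = x + 1 ∧ x + 1 < i) (hpos : 0 < a') :
    ¬ SuffixAvoids (n + 1) (insertAt p i n) (a' - 1) := by
  intro hsuf
  rw [suffixAvoids_insertAt (by omega) (hi.trans h.le_length) h.lt_length] at hsuf
  rcases ha' with rfl | ⟨x, hx, rfl, hxi⟩
  · exact h.suffix_maximal hpos hsuf.1
  · have := h.shape.low x hx (x + 1) (Nat.lt_add_one x) (hxi.trans_le hi)
    have := hsuf.2 x (x + 1) le_rfl (Nat.lt_add_one x) hxi
    omega

lemma insertAt_after_lows (h : Profile n p a b L) (hai : a ≤ i) (hia : i ≤ a + 1) (hi : i ≤ b)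
    (hlow : ∀ x < i, x ∈ L) :
    Profile (n + 1) (insertAt p i n) a (b + 1) {x | x < i ∨ i < x ∧ x - 1 ∈ L} where
  lt_length := insertAt_lt_succ (hi.trans h.le_length) h.lt_length
  le := h.le.trans b.le_succ
  le_length := Nat.succ_le_succ h.le_length
  shape := h.shape.insertAt_max hi (fun j hj => h.lt_length j (hj.trans_le h.le_length)) hlow
  prefix_maximal hb hpre :=
    h.prefix_maximal (Nat.lt_of_succ_lt_succ hb) (hpre.of_insertAt (hi.trans b.le_succ))
  suffixAvoids := (suffixAvoids_insertAt hai (hi.trans h.le_length) h.lt_length).2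
    ⟨h.suffixAvoids, by omega⟩
  suffix_maximal := h.suffix_maximal_insertAt hi hai (.inl rfl)

lemma prefix_maximal_insertAt_succ (h : Profile n p a b L) (hc : c ∉ L) (hcb : c < b)
    (hcn : c + 1 < n) : ¬ PrefixAvoids (insertAt p (c + 1) n) (c + 2 + 1) := by
  intro hpre
  rcases Nat.lt_or_ge (c + 1) b with hcb' | hcb'
  · have := h.shape.high c hc (c + 1) (Nat.lt_add_one c) hcb'
    have := hpre.le_of_insertAt (c + 1).le_succ hcn h.lt_length (Nat.lt_add_one c)
      (Nat.lt_add_one c) (Nat.lt_add_one _)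
    omega
  · obtain rfl : b = c + 1 := by omega
    exact h.prefix_maximal hcn (hpre.of_insertAt (c + 1).le_succ)

lemma insertAt_after_first_high (h : Profile n p a b L) (hac : a ≤ c) (hcb : c < b)
    (hlow : ∀ x < c, x ∈ L) (hc : c ∉ L) :
    Profile (n + 1) (insertAt p (c + 1) n) c (c + 2) {x | x ≤ c} where
  lt_length := insertAt_lt_succ (hcb.trans_le h.le_length) h.lt_length
  le := by omega
  le_length := by have := h.le_length; omega
  shape := by
    have hlows : PrefixShape p (c + 1) {x | x < c + 1} :=
      h.shape.restrict hcb fun x hx => iff_of_true (hlow x (by omega)) (Nat.lt_of_succ_lt hx)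
    have hm : ∀ j < c + 1, p j < n := fun j hj => h.lt_length j (by have := h.le_length; omega)
    refine (hlows.insertAt_max le_rfl hm fun x hx => hx).restrict le_rfl fun x hx => ?_
    simp only [Set.mem_ofPred_eq]
    omega
  prefix_maximal hn := h.prefix_maximal_insertAt_succ hc hcb (by omega)
  suffixAvoids := (suffixAvoids_insertAt c.le_succ (hcb.trans_le h.le_length) h.lt_length).2
    ⟨h.suffixAvoids.mono hac, by omega⟩
  suffix_maximal := by
    refine h.suffix_maximal_insertAt hcb c.le_succ ?_
    rcases hac.eq_or_lt with rfl | hac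
    · exact .inl rfl
    · exact .inr ⟨c - 1, hlow _ (by omega), by omega, by omega⟩

lemma insertAt_after_descent (h : Profile n p a b L) (ha : a ≤ a') (hai : a' ≤ i) (hi : i ≤ b)
    (hdesc : ∃ x ∉ L, x + 1 < i) (hhigh : ∀ x, a' ≤ x → x + 1 < i → x ∉ L)
    (ha' : a' = a ∨ ∃ x ∈ L, a' = x + 1 ∧ x + 1 < i) :
    Profile (n + 1) (insertAt p i n) a' i L where
  lt_length := insertAt_lt_succ (hi.trans h.le_length) h.lt_length
  le := hai
  le_length := (hi.trans h.le_length).trans n.le_succ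
  shape := h.shape.insertAt_prefix hi
  prefix_maximal _ hpre := by
    obtain ⟨x, hx, hxi⟩ := hdesc
    have := h.shape.high x hx (x + 1) (Nat.lt_add_one x) (hxi.trans_le hi)
    have := hpre.le_of_insertAt le_rfl (hi.trans h.le_length) h.lt_length (by omega)
      (Nat.lt_add_one x) hxi
    omega
  suffixAvoids := (suffixAvoids_insertAt hai (hi.trans h.le_length) h.lt_length).2
    ⟨h.suffixAvoids.mono ha, fun x y hx hxy hy =>
      (h.shape.high x (hhigh x hx (by omega)) y hxy (hy.trans_le hi)).le⟩
  suffix_maximal := h.suffix_maximal_insertAt hi hai ha'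

end Profile

/-- The labels of the generating tree. They record what the letters between the first active site
`a` and the last one `b` look like: `k` high letters for `oneRun k`; `s` high letters, a low one and
`t + 1` more (of which the last is both high and low) for `twoRuns s t`; `k` high letters for
`afterDescent k`, where moreover some letter before position `a - 1` is high. In the first two cases
all letters before `a` are low. -/
inductive Label
  | oneRun (k : ℕ)
  | twoRuns (s t : ℕ)
  | afterDescent (k : ℕ)

namespace Label

/-- The number of children of a word with the given label, that is, of its active sites. -/
def degree : Label → ℕ
  | oneRun k => k + 1
  | twoRuns s t => s + t + 3
  | afterDescent k => k + 1

/-- The label of the `j`-th child: the word with a new largest letter at the `j`-th active site. -/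
def child : Label → ℕ → Label
  | oneRun k, 0 => oneRun (k + 1)
  | oneRun _, 1 => twoRuns 0 0
  | oneRun _, j + 2 => oneRun (j + 2)
  | twoRuns 0 t, 0 => twoRuns 1 t
  | twoRuns 0 t, 1 => twoRuns 0 (t + 1)
  | twoRuns 0 _, 2 => twoRuns 0 0
  | twoRuns 0 _, j + 3 => oneRun (j + 2)
  | twoRuns (s + 1) t, 0 => twoRuns (s + 2) t
  | twoRuns (_ + 1) _, 1 => twoRuns 0 0
  | twoRuns (s + 1) _, j + 2 => if j ≤ s then oneRun (j + 2) else afterDescent (j - s)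
  | afterDescent _, j => afterDescent j

end Label

open Label

/-- The word `p` of length `n` has the given label, and its first active site is `a`. -/
def HasLabel (n : ℕ) (p : ℕ → ℕ) (a : ℕ) : Label → Prop
  | oneRun k => Profile n p a (a + k) {x | x < a}
  | twoRuns s t => Profile n p a (a + s + t + 2) {x | x < a ∨ x = a + s}
  | afterDescent k => ∃ L, Profile n p a (a + k) L ∧ (∃ x ∉ L, x + 1 < a) ∧ ∀ x, a ≤ x → x ∉ L

namespace HasLabel

variable {n : ℕ} {p : ℕ → ℕ} {a i j k s t : ℕ} {ℓ : Label}

lemma empty (p : ℕ → ℕ) : HasLabel 0 p 0 (oneRun 0) where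
  lt_length := by simp
  le := le_rfl
  le_length := le_rfl
  shape := ⟨by simp, by simp⟩
  prefix_maximal := by simp
  suffixAvoids := by simp [SuffixAvoids]
  suffix_maximal := by simp

lemma isActiveSite_iff (h : HasLabel n p a ℓ) (hi : i ≤ n) :
    IsActiveSite n p i ↔ a ≤ i ∧ i < a + ℓ.degree := by
  rcases ℓ with k | ⟨s, t⟩ | k
  · rw [Profile.isActiveSite_iff h hi, degree]
    omega
  · rw [Profile.isActiveSite_iff h hi, degree]
    omega
  · obtain ⟨L, h, -⟩ := h
    rw [h.isActiveSite_iff hi, degree]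
    omega

lemma add_degree_le (h : HasLabel n p a ℓ) : a + ℓ.degree ≤ n + 1 := by
  rcases ℓ with k | ⟨s, t⟩ | k
  · exact Nat.succ_le_succ (Profile.le_length h)
  · have := Profile.le_length h
    rw [degree]
    omega
  · obtain ⟨L, h, -⟩ := h
    exact Nat.succ_le_succ h.le_length

lemma oneRun_child (h : HasLabel n p a (oneRun k)) (hj : j ≤ k) :
    HasLabel (n + 1) (insertAt p (a + j) n) a ((oneRun k).child j) := by
  have h : Profile n p a (a + k) {x | x < a} := h
  match j with
  | 0 =>
    refine (h.insertAt_after_lows le_rfl a.le_succ h.le fun x hx => hx).congr rfl fun x _ => ?_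
    simp only [Set.mem_ofPred_eq]
    omega
  | 1 =>
    refine (h.insertAt_after_first_high le_rfl (by omega) (fun x hx => hx) (lt_irrefl a)).congr rfl
      fun x hx => ?_
    simp only [Set.mem_ofPred_eq]
    omega
  | j + 2 =>
    exact h.insertAt_after_descent le_rfl (by omega) (by omega) ⟨a, lt_irrefl a, by omega⟩
      (fun x hx _ => not_lt.2 hx) (.inl rfl)

lemma twoRuns_zero_child (h : HasLabel n p a (twoRuns 0 t)) (hj : j ≤ t + 2) :
    ∃ a', HasLabel (n + 1) (insertAt p (a + j) n) a' ((twoRuns 0 t).child j) := by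
  have h : Profile n p a (a + t + 2) {x | x < a ∨ x = a} := h
  match j with
  | 0 =>
    refine ⟨a, (h.insertAt_after_lows le_rfl a.le_succ h.le fun x hx => .inl hx).congr
      (by omega) fun x _ => ?_⟩
    simp only [Set.mem_ofPred_eq]
    omega
  | 1 =>
    refine ⟨a, (h.insertAt_after_lows a.le_succ le_rfl (by omega) fun x hx => ?_).congr
      (by omega) fun x _ => ?_⟩
    all_goals
      simp only [Set.mem_ofPred_eq]
      omega
  | 2 =>
    refine ⟨a + 1, (h.insertAt_after_first_high a.le_succ (by omega) (fun x hx => ?_) ?_).congr rfl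
      fun x hx => ?_⟩
    all_goals
      simp only [Set.mem_ofPred_eq]
      omega
  | j + 3 =>
    refine ⟨a + 1, (h.insertAt_after_descent (a' := a + 1) (i := a + (j + 3)) a.le_succ (by omega)
      (by omega) ⟨a + 1, ?_, by omega⟩ (fun x hx _ => ?_)
      (.inr ⟨a, .inr rfl, rfl, by omega⟩)).congr (by omega) fun x _ => ?_⟩
    all_goals
      simp only [Set.mem_ofPred_eq]
      omega

lemma twoRuns_succ_child (h : HasLabel n p a (twoRuns (s + 1) t)) (hj : j ≤ s + t + 3) :
    ∃ a', HasLabel (n + 1) (insertAt p (a + j) n) a' ((twoRuns (s + 1) t).child j) := by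
  have h : Profile n p a (a + (s + 1) + t + 2) {x | x < a ∨ x = a + (s + 1)} := h
  match j with
  | 0 =>
    refine ⟨a, (h.insertAt_after_lows le_rfl a.le_succ h.le fun x hx => .inl hx).congr
      (by omega) fun x _ => ?_⟩
    simp only [Set.mem_ofPred_eq]
    omega
  | 1 =>
    refine ⟨a, (h.insertAt_after_first_high le_rfl (by omega) (fun x hx => .inl hx) ?_).congr rfl
      fun x hx => ?_⟩
    all_goals
      simp only [Set.mem_ofPred_eq]
      omega
  | j + 2 =>
    have ha : a ∉ {x | x < a ∨ x = a + (s + 1)} := by simp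
    simp only [child]
    split_ifs with hjs
    · refine ⟨a, (h.insertAt_after_descent (i := a + (j + 2)) le_rfl (by omega) (by omega)
        ⟨a, ha, by omega⟩ (fun x hx _ => ?_) (.inl rfl)).congr rfl fun x hx => ?_⟩
      all_goals
        simp only [Set.mem_ofPred_eq]
        omega
    · refine ⟨a + s + 2, _, (h.insertAt_after_descent (a' := a + s + 2) (i := a + (j + 2))
        (by omega) (by omega) (by omega) ⟨a, ha, by omega⟩ (fun x hx _ => ?_)
        (.inr ⟨a + (s + 1), .inr rfl, by omega, by omega⟩)).congr (by omega) fun _ _ => Iff.rfl,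
        ⟨a, ha, by omega⟩, fun x hx => ?_⟩
      all_goals
        simp only [Set.mem_ofPred_eq]
        omega

lemma afterDescent_child (h : HasLabel n p a (afterDescent k)) (hj : j ≤ k) :
    HasLabel (n + 1) (insertAt p (a + j) n) a ((afterDescent k).child j) := by
  obtain ⟨L, h, ⟨x, hx, hxa⟩, hhigh⟩ := h
  exact ⟨L, h.insertAt_after_descent le_rfl (by omega) (by omega) ⟨x, hx, by omega⟩
    (fun y hy _ => hhigh y hy) (.inl rfl), ⟨x, hx, hxa⟩, hhigh⟩

lemma exists_child (h : HasLabel n p a ℓ) (hj : j < ℓ.degree) :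
    ∃ a', HasLabel (n + 1) (insertAt p (a + j) n) a' (ℓ.child j) := by
  match ℓ with
  | oneRun k => exact ⟨a, h.oneRun_child (Nat.le_of_lt_succ hj)⟩
  | twoRuns 0 t => exact h.twoRuns_zero_child (by rw [degree] at hj; omega)
  | twoRuns (s + 1) t => exact h.twoRuns_succ_child (by rw [degree] at hj; omega)
  | afterDescent k => exact ⟨a, h.afterDescent_child (Nat.le_of_lt_succ hj)⟩

end HasLabel

section GeneratingFunctions

/-- The power series `1 / (1 - x)`. -/
noncomputable def geomGF : PowerSeries ℚ := (1 - X)⁻¹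

/-- The power series `1 / (1 - 2x)`. -/
noncomputable def geomTwoGF : PowerSeries ℚ := (1 - 2 * X)⁻¹

/-- The generating function of the subtree below a word labelled `twoRuns 0 0`, the solution of the
kernel-method equation `kernel_mul_branchGF`. -/
noncomputable def branchGF : PowerSeries ℚ :=
  (2 * catalanGF - 1 - X * catalanGF + X ^ 2 * geomGF ^ 2 * geomTwoGF) *
    (catalanGF * ((1 - X) ^ 2 - X * catalanGF))⁻¹

/-- The common factor of the generating functions below the words labelled `oneRun`. -/
noncomputable def trunkGF : PowerSeries ℚ := 1 + X * branchGF

/-- The generating function, by number of insertions, of the descendants of a word with the given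
label. The closed forms solve the system `labelGF_eq`. -/
noncomputable def labelGF : Label → PowerSeries ℚ
  | oneRun 0 => 1 + X * (trunkGF * catalanGF)
  | oneRun (k + 1) => trunkGF * catalanGF ^ (k + 1)
  | twoRuns 0 t => branchGF + trunkGF * (catalanGF ^ (t + 1) - catalanGF) +
      X * geomGF ^ 2 * geomTwoGF * (geomGF ^ t - 1)
  | twoRuns (s + 1) t => geomGF ^ (t + 3) - geomGF ^ 2 + trunkGF * catalanGF ^ (s + 2)
  | afterDescent k => geomGF ^ (k + 1)

lemma catalanGF_eq : catalanGF = 1 + X * catalanGF ^ 2 := by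
  have hmap : catalanGF = PowerSeries.map (Nat.castRingHom ℚ) catalanSeries := by
    ext n
    simp [catalanGF]
  have := congrArg (PowerSeries.map (Nat.castRingHom ℚ)) catalanSeries_sq_mul_X_add_one
  simp only [map_add, map_mul, map_pow, map_one, map_X, ← hmap] at this
  linear_combination -this

lemma X_mul_geomGF : X * geomGF = geomGF - 1 := by
  have : geomGF * (1 - X) = 1 := PowerSeries.inv_mul_cancel _ (by simp)
  linear_combination -this

lemma two_mul_X_mul_geomTwoGF : 2 * X * geomTwoGF = geomTwoGF - 1 := by
  have : geomTwoGF * (1 - 2 * X) = 1 := PowerSeries.inv_mul_cancel _ (by simp)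
  linear_combination -this

lemma kernel_mul_branchGF :
    catalanGF * ((1 - X) ^ 2 - X * catalanGF) * branchGF =
      2 * catalanGF - 1 - X * catalanGF + X ^ 2 * geomGF ^ 2 * geomTwoGF := by
  have hcat : constantCoeff catalanGF = 1 := by
    rw [catalanGF_eq]
    simp
  rw [branchGF, mul_left_comm, PowerSeries.mul_inv_cancel _ (by simp [hcat]), mul_one]

lemma X_mul_sum_catalanGF_pow (k : ℕ) :
    X * ∑ j ∈ Finset.range k, catalanGF ^ (j + 2) = catalanGF ^ k - 1 := by
  rw [Finset.mul_sum, ← pow_zero catalanGF, ← Finset.sum_range_sub]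
  exact Finset.sum_congr rfl fun j _ => by linear_combination -catalanGF ^ j * catalanGF_eq

lemma X_mul_sum_geomGF_pow (k : ℕ) :
    X * ∑ j ∈ Finset.range k, geomGF ^ (j + 1) = geomGF ^ k - 1 := by
  rw [Finset.mul_sum, ← pow_zero geomGF, ← Finset.sum_range_sub]
  exact Finset.sum_congr rfl fun j _ => by linear_combination geomGF ^ j * X_mul_geomGF

lemma labelGF_twoRuns_zero_zero : labelGF (twoRuns 0 0) = branchGF := by
  simp [labelGF]

lemma X_mul_sum_labelGF_oneRun (k : ℕ) :
    X * ∑ j ∈ Finset.range k, labelGF (oneRun (j + 2)) = trunkGF * (catalanGF ^ k - 1) := by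
  simp only [labelGF, ← Finset.mul_sum]
  rw [mul_left_comm, X_mul_sum_catalanGF_pow]

lemma X_mul_sum_labelGF_afterDescent (k : ℕ) :
    X * ∑ j ∈ Finset.range k, labelGF (afterDescent j) = geomGF ^ k - 1 :=
  X_mul_sum_geomGF_pow k

lemma labelGF_oneRun_succ (k : ℕ) :
    labelGF (oneRun (k + 1)) = 1 + X * (labelGF (oneRun (k + 2)) + labelGF (twoRuns 0 0) +
      ∑ j ∈ Finset.range k, labelGF (oneRun (j + 2))) := by
  rw [mul_add, X_mul_sum_labelGF_oneRun, labelGF_twoRuns_zero_zero]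
  simp only [labelGF, trunkGF]
  linear_combination (1 + X * branchGF) * catalanGF ^ k * catalanGF_eq

lemma geomTwoGF_mul_two_sub_geomGF : geomTwoGF * (2 - geomGF) = geomGF := by
  linear_combination 2 * geomTwoGF * X_mul_geomGF - geomGF * two_mul_X_mul_geomTwoGF

/-- This is the part of the equation for `twoRuns 0 t` that does not depend on `t`. -/
lemma one_sub_X_mul_branchGF_sub :
    (1 - X) * (branchGF - trunkGF * catalanGF - X * geomGF ^ 2 * geomTwoGF) =
      X * (trunkGF * catalanGF ^ 2 - geomGF ^ 2) := by
  have hsub : geomGF - geomTwoGF = -X * geomGF * geomTwoGF := by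
    linear_combination geomGF * two_mul_X_mul_geomTwoGF - geomTwoGF * X_mul_geomGF
  rw [trunkGF]
  linear_combination kernel_mul_branchGF + (1 - (1 - X) * branchGF) * catalanGF_eq +
    X * geomGF * geomTwoGF * X_mul_geomGF + X * geomGF * hsub
lemma labelGF_twoRuns_zero (t : ℕ) :
    labelGF (twoRuns 0 t) = 1 + X * (labelGF (twoRuns 1 t) + labelGF (twoRuns 0 (t + 1)) +
      labelGF (twoRuns 0 0) + ∑ j ∈ Finset.range t, labelGF (oneRun (j + 2))) := by
  have htrunk : trunkGF = 1 + X * branchGF := rfl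
  rw [mul_add, X_mul_sum_labelGF_oneRun, labelGF_twoRuns_zero_zero]
  simp only [labelGF]
  linear_combination trunkGF * catalanGF ^ t * catalanGF_eq + one_sub_X_mul_branchGF_sub +
    X * geomGF ^ (t + 2) * (geomTwoGF_mul_two_sub_geomGF - geomTwoGF * X_mul_geomGF) +
    htrunk

lemma labelGF_twoRuns_succ (s t : ℕ) :
    labelGF (twoRuns (s + 1) t) = 1 + X * (labelGF (twoRuns (s + 2) t) + labelGF (twoRuns 0 0) +
      ∑ j ∈ Finset.range (s + 1), labelGF (oneRun (j + 2)) +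
      ∑ j ∈ Finset.range (t + 1), labelGF (afterDescent (j + 1))) := by
  have htail := X_mul_sum_labelGF_afterDescent (t + 2)
  rw [Finset.sum_range_succ', mul_add] at htail
  rw [mul_add, mul_add _ _ (∑ j ∈ _, _), X_mul_sum_labelGF_oneRun, labelGF_twoRuns_zero_zero]
  simp only [labelGF, trunkGF] at htail ⊢
  linear_combination (1 + X * branchGF) * catalanGF ^ (s + 1) * catalanGF_eq - htail -
    (geomGF ^ (t + 2) - geomGF - 1) * X_mul_geomGF

lemma labelGF_afterDescent (k : ℕ) :
    labelGF (afterDescent k) = 1 + X * ∑ j ∈ Finset.range (k + 1), labelGF (afterDescent j) := by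
  rw [X_mul_sum_labelGF_afterDescent, labelGF]
  ring

lemma sum_labelGF_child_twoRuns_succ (s t : ℕ) :
    ∑ j ∈ Finset.range (twoRuns (s + 1) t).degree, labelGF ((twoRuns (s + 1) t).child j) =
      labelGF (twoRuns (s + 2) t) + labelGF (twoRuns 0 0) +
        ∑ j ∈ Finset.range (s + 1), labelGF (oneRun (j + 2)) +
        ∑ j ∈ Finset.range (t + 1), labelGF (afterDescent (j + 1)) := by
  have hrun : ∀ j ∈ Finset.range (s + 1),
      labelGF ((twoRuns (s + 1) t).child (j + 2)) = labelGF (oneRun (j + 2)) := by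
    intro j hj
    rw [child, if_pos (Finset.mem_range_succ_iff.1 hj)]
  have htail : ∀ j, labelGF ((twoRuns (s + 1) t).child (s + 1 + j + 2)) =
      labelGF (afterDescent (j + 1)) := by
    intro j
    rw [child, if_neg (by omega), show s + 1 + j - s = j + 1 by omega]
  rw [degree, show s + 1 + t + 3 = s + 1 + (t + 1) + 1 + 1 by ring, Finset.sum_range_succ',
    Finset.sum_range_succ', Finset.sum_range_add, Finset.sum_congr rfl hrun,
    Finset.sum_congr rfl fun j _ => htail j]
  simp only [child]
  ring

lemma labelGF_eq (ℓ : Label) :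
    labelGF ℓ = 1 + X * ∑ j ∈ Finset.range ℓ.degree, labelGF (ℓ.child j) := by
  match ℓ with
  | oneRun 0 => simp [labelGF, degree, child]
  | oneRun (k + 1) =>
    rw [labelGF_oneRun_succ, degree, Finset.sum_range_succ', Finset.sum_range_succ']
    simp only [child]
    ring
  | twoRuns 0 t =>
    rw [labelGF_twoRuns_zero, degree, zero_add, Finset.sum_range_succ', Finset.sum_range_succ',
      Finset.sum_range_succ']
    simp only [child]
    ring
  | twoRuns (s + 1) t =>
    rw [labelGF_twoRuns_succ, sum_labelGF_child_twoRuns_succ]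
  | afterDescent k => exact labelGF_afterDescent k

lemma mul_labelGF_root :
    (X * catalanGF - (X - 1) ^ 2) * (X - 1) ^ 2 * (2 * X - 1) * labelGF (oneRun 0) =
      X * (X - 1) ^ 2 * (2 * X - 1) * catalanGF +
        (3 * X ^ 4 - 7 * X ^ 3 + 9 * X ^ 2 - 5 * X + 1) := by
  have hgeom : geomGF ^ 2 * geomTwoGF * ((1 - X) ^ 2 * (1 - 2 * X)) = 1 := by
    linear_combination -(geomGF * (1 - X) + 1) * (geomTwoGF * (1 - 2 * X)) * X_mul_geomGF -
      two_mul_X_mul_geomTwoGF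
  rw [labelGF, trunkGF]
  linear_combination X ^ 2 * (1 - X) ^ 2 * (1 - 2 * X) * kernel_mul_branchGF + X ^ 4 * hgeom +
    X * ((1 - X) ^ 2 * (1 - 2 * X)) * catalanGF_eq

end GeneratingFunctions

section Counting

open Classical in
/-- The number of ways to insert `m` further letters into the word `p` of length `n`, each one
larger than all previous letters and at an active site. -/
noncomputable def descendantCount : ℕ → ℕ → (ℕ → ℕ) → ℕ
  | 0, _, _ => 1
  | m + 1, n, p => ∑ i ∈ Finset.range (n + 1) with IsActiveSite n p i,
      descendantCount m (n + 1) (insertAt p i n)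

variable {n : ℕ} {p : ℕ → ℕ} {a : ℕ} {ℓ : Label}

lemma HasLabel.descendantCount_succ (h : HasLabel n p a ℓ) (m : ℕ) :
    descendantCount (m + 1) n p =
      ∑ j ∈ Finset.range ℓ.degree, descendantCount m (n + 1) (insertAt p (a + j) n) := by
  classical
  have hsites : {i ∈ Finset.range (n + 1) | IsActiveSite n p i} =
      Finset.Ico a (a + ℓ.degree) := by
    ext i
    have := h.add_degree_le
    rw [Finset.mem_filter, Finset.mem_range, Finset.mem_Ico]
    constructor
    · exact fun ⟨hi, hsite⟩ => (h.isActiveSite_iff (Nat.le_of_lt_succ hi)).1 hsite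
    · exact fun hi => ⟨by omega, (h.isActiveSite_iff (by omega)).2 hi⟩
  rw [descendantCount, hsites, Finset.sum_Ico_eq_sum_range, Nat.add_sub_cancel_left]

theorem HasLabel.descendantCount_eq (h : HasLabel n p a ℓ) (m : ℕ) :
    (descendantCount m n p : ℚ) = coeff m (labelGF ℓ) := by
  induction m generalizing n p a ℓ with
  | zero =>
    rw [labelGF_eq]
    simp [descendantCount]
  | succ m ih =>
    rw [h.descendantCount_succ, labelGF_eq, map_add, coeff_succ_X_mul, map_sum, coeff_one,
      if_neg m.succ_ne_zero, zero_add, Nat.cast_sum]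
    refine Finset.sum_congr rfl fun j hj => ?_
    obtain ⟨a', hchild⟩ := h.exists_child (Finset.mem_range.1 hj)
    exact ih hchild

end Counting

section Permutations

variable {n : ℕ}

/-- The permutation whose word is that of `π` with a new largest letter inserted at position `i`. -/
def insertMax (i : Fin (n + 1)) (π : Equiv.Perm (Fin n)) : Equiv.Perm (Fin (n + 1)) :=
  ((finSuccEquiv' i).trans (Equiv.optionCongr π)).trans (finSuccEquiv' (Fin.last n)).symm

lemma insertMax_self (i : Fin (n + 1)) (π : Equiv.Perm (Fin n)) :
    insertMax i π i = Fin.last n := by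
  simp [insertMax]

lemma insertMax_succAbove (i : Fin (n + 1)) (π : Equiv.Perm (Fin n)) (j : Fin n) :
    insertMax i π (i.succAbove j) = (π j).castSucc := by
  simp [insertMax]

lemma insertMax_bijective :
    Function.Bijective fun x : Fin (n + 1) × Equiv.Perm (Fin n) => insertMax x.1 x.2 := by
  rw [Fintype.bijective_iff_injective_and_card]
  refine ⟨?_, by simp [Fintype.card_perm, Nat.factorial_succ]⟩
  rintro ⟨i, π⟩ ⟨i', π'⟩ (h : insertMax i π = insertMax i' π')
  obtain rfl : i = i' := by
    apply (insertMax i π).injective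
    rw [insertMax_self, h, insertMax_self]
  congr 1
  ext j
  have := insertMax_succAbove i π j
  rw [h, insertMax_succAbove] at this
  rw [Fin.castSucc_injective _ this]

/-- The word of a permutation of `Fin n`, with the junk value `0` from position `n` on. -/
def wordOf (π : Equiv.Perm (Fin n)) : ℕ → ℕ := fun j => if h : j < n then π ⟨j, h⟩ else 0

lemma wordOf_val (π : Equiv.Perm (Fin n)) (j : Fin n) : wordOf π j = π j := by
  simp [wordOf]

lemma wordOf_lt (π : Equiv.Perm (Fin n)) : ∀ j < n, wordOf π j < n := fun j hj =>
  (wordOf_val π ⟨j, hj⟩).trans_lt (π ⟨j, hj⟩).isLt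

lemma val_succAbove (i : Fin (n + 1)) (j : Fin n) : (i.succAbove j : ℕ) = skip i j := by
  simp only [Fin.succAbove, skip, Fin.lt_def, Fin.val_castSucc]
  split_ifs <;> rfl

lemma wordOf_insertMax (i : Fin (n + 1)) (π : Equiv.Perm (Fin n)) :
    wordOf (insertMax i π) = insertAt (wordOf π) i n := by
  funext j
  rcases lt_or_ge j (n + 1) with hj | hj
  · lift j to Fin (n + 1) using hj
    rw [wordOf_val]
    rcases eq_or_ne j i with rfl | hji
    · rw [insertMax_self, insertAt_self, Fin.val_last]
    · obtain ⟨k, rfl⟩ := Fin.exists_succAbove_eq hji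
      rw [insertMax_succAbove, val_succAbove, insertAt_skip, wordOf_val, Fin.val_castSucc]
  · have := i.isLt
    rw [wordOf, dif_neg (by omega), insertAt, if_neg (by omega), if_neg (by omega), wordOf,
      dif_neg (by omega)]

open Classical in
lemma sum_descendantCount_succ (m n : ℕ) :
    ∑ π : Equiv.Perm (Fin (n + 1)) with AvoidsWord (n + 1) (wordOf π),
        descendantCount m (n + 1) (wordOf π) =
      ∑ π : Equiv.Perm (Fin n) with AvoidsWord n (wordOf π),
        descendantCount (m + 1) n (wordOf π) := by
  simp only [Finset.sum_filter]
  rw [← insertMax_bijective.sum_comp, Fintype.sum_prod_type, Finset.sum_comm]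
  refine Finset.sum_congr rfl fun π _ => ?_
  simp only [wordOf_insertMax, avoidsWord_insertAt (Nat.le_of_lt_succ (Fin.isLt _)) (wordOf_lt π),
    descendantCount, Finset.sum_filter, Finset.sum_range, ite_and]
  split_ifs
  · rfl
  · exact Finset.sum_const_zero

open Classical in
lemma sum_descendantCount_eq (m n : ℕ) :
    ((∑ π : Equiv.Perm (Fin n) with AvoidsWord n (wordOf π), descendantCount m n (wordOf π) : ℕ) :
      ℚ) = coeff (m + n) (labelGF (oneRun 0)) := by
  induction n generalizing m with
  | zero =>
    rw [Finset.filter_true_of_mem (by simp [AvoidsWord]), Fintype.sum_unique]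
    exact (HasLabel.empty _).descendantCount_eq m
  | succ n ih => rw [sum_descendantCount_succ, ih, add_right_comm, add_assoc]

theorem card_avoidsWord (n : ℕ) :
    (Nat.card {π : Equiv.Perm (Fin n) // AvoidsWord n (wordOf π)} : ℚ) =
      coeff n (labelGF (oneRun 0)) := by
  classical
  have := sum_descendantCount_eq 0 n
  simp only [descendantCount, Finset.sum_const, smul_eq_mul, mul_one, zero_add] at this
  rw [Nat.card_eq_fintype_card, Fintype.card_subtype, this]

end Permutations

section Patterns

variable {n k : ℕ} {π : Equiv.Perm (Fin n)} {σ τ : Fin k → Fin k}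

lemma ContainsPattern.revPerm_conj (h : ContainsPattern π σ) :
    ContainsPattern (Fin.revPerm * π * Fin.revPerm) (Fin.rev ∘ σ ∘ Fin.rev) := by
  obtain ⟨f, hf⟩ := h
  have hmono : StrictMono (Fin.rev ∘ f ∘ Fin.rev) :=
    Fin.rev_strictAnti.comp (f.strictMono.comp_strictAnti Fin.rev_strictAnti)
  refine ⟨OrderEmbedding.ofStrictMono _ hmono, fun a b => ?_⟩
  simp [hf]

lemma containsPattern_revPerm_conj_iff :
    ContainsPattern (Fin.revPerm * π * Fin.revPerm) σ ↔
      ContainsPattern π (Fin.rev ∘ σ ∘ Fin.rev) := by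
  refine ⟨fun h => ?_, fun h => ?_⟩
  · convert h.revPerm_conj
    ext; simp
  · convert h.revPerm_conj
    ext; simp

lemma containsPattern_iff_strictMono (hτσ : Function.LeftInverse τ σ)
    (hστ : Function.RightInverse τ σ) :
    ContainsPattern π σ ↔ ∃ f : Fin k ↪o Fin n, StrictMono (π ∘ f ∘ τ) := by
  refine exists_congr fun f => ⟨fun h a b hab => (h _ _).1 ?_, fun h a b => ?_⟩
  · rwa [hστ a, hστ b]
  · simpa [hτσ a, hτσ b] using (h.lt_iff_lt (a := σ a) (b := σ b)).symm

lemma containsPattern_four_iff {σ τ : Fin 4 → Fin 4} (hτσ : Function.LeftInverse τ σ)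
    (hστ : Function.RightInverse τ σ) :
    ContainsPattern π σ ↔ ∃ w x y z : Fin n, w < x ∧ x < y ∧ y < z ∧
      StrictMono (π ∘ ![w, x, y, z] ∘ τ) := by
  rw [containsPattern_iff_strictMono hτσ hστ]
  constructor
  · rintro ⟨f, hf⟩
    have hvec : ![f 0, f 1, f 2, f 3] = f := by
      funext j
      fin_cases j <;> rfl
    exact ⟨f 0, f 1, f 2, f 3, by simp, by simp, by simp, hvec ▸ hf⟩
  · rintro ⟨w, x, y, z, hwx, hxy, hyz, h⟩
    have hmono : StrictMono ![w, x, y, z] := by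
      simp [Fin.strictMono_iff_lt_succ, Fin.forall_fin_succ, *]
    exact ⟨OrderEmbedding.ofStrictMono _ hmono, h⟩

lemma avoidsWord_wordOf_iff_forall : AvoidsWord n (wordOf π) ↔
    ∀ w x y z : Fin n, w < x → x < y → y < z →
      ¬ (π x < π w ∧ π w < π y ∧ π y < π z) ∧ ¬ (π y < π w ∧ π w < π x ∧ π x < π z) ∧
      ¬ (π x < π y ∧ π y < π z ∧ π z < π w) := by
  constructor
  · intro h w x y z hwx hxy hyz
    simpa only [wordOf_val, Fin.lt_def] using h w x y z hwx hxy hyz z.isLt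
  · intro h w x y z hwx hxy hyz hz
    lift z to Fin n using hz
    lift y to Fin n using hyz.trans z.isLt
    lift x to Fin n using hxy.trans y.isLt
    lift w to Fin n using hwx.trans x.isLt
    simpa only [wordOf_val, Fin.lt_def] using h w x y z hwx hxy hyz

lemma avoidsWord_wordOf_iff : AvoidsWord n (wordOf π) ↔
    ¬ ContainsPattern π ![1, 0, 2, 3] ∧ ¬ ContainsPattern π ![1, 2, 0, 3] ∧
      ¬ ContainsPattern π ![3, 0, 1, 2] := by
  rw [avoidsWord_wordOf_iff_forall,
    containsPattern_four_iff (τ := ![1, 0, 2, 3]) (by decide) (by decide),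
    containsPattern_four_iff (τ := ![2, 0, 1, 3]) (by decide) (by decide),
    containsPattern_four_iff (τ := ![1, 2, 3, 0]) (by decide) (by decide)]
  simp [Fin.strictMono_iff_lt_succ, Fin.forall_fin_succ, -exists_and_left, imp_and, forall_and]

lemma avoids_iff_avoidsWord_revPerm_conj (π : Equiv.Perm (Fin n)) :
    (∀ σ ∈ ({![0,1,3,2], ![0,3,1,2], ![1,2,3,0]} : Set (Fin 4 → Fin 4)), ¬ ContainsPattern π σ) ↔
      AvoidsWord n (wordOf (Fin.revPerm * π * Fin.revPerm)) := by
  have h₁ : Fin.rev ∘ ![1, 0, 2, 3] ∘ Fin.rev = (![0, 1, 3, 2] : Fin 4 → Fin 4) := by decide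
  have h₂ : Fin.rev ∘ ![1, 2, 0, 3] ∘ Fin.rev = (![0, 3, 1, 2] : Fin 4 → Fin 4) := by decide
  have h₃ : Fin.rev ∘ ![3, 0, 1, 2] ∘ Fin.rev = (![1, 2, 3, 0] : Fin 4 → Fin 4) := by decide
  simp only [avoidsWord_wordOf_iff, containsPattern_revPerm_conj_iff, h₁, h₂, h₃,
    Set.mem_insert_iff, Set.mem_singleton_iff, forall_eq_or_imp, forall_eq]

lemma avoiderCount_eq (n : ℕ) :
    avoiderCount {![0,1,3,2], ![0,3,1,2], ![1,2,3,0]} n =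
      Nat.card {π : Equiv.Perm (Fin n) // AvoidsWord n (wordOf π)} :=
  Nat.card_congr (((Equiv.mulLeft Fin.revPerm).trans (Equiv.mulRight Fin.revPerm)).subtypeEquiv
    avoids_iff_avoidsWord_revPerm_conj)

end Patterns

theorem avoiderGF_eq :
    avoiderGF {![0,1,3,2], ![0,3,1,2], ![1,2,3,0]} = labelGF (oneRun 0) := by
  ext n
  rw [avoiderGF, coeff_mk, avoiderCount_eq, card_avoidsWord]

theorem statement_16 :
    ((X : PowerSeries ℚ) * catalanGF - (X - 1)^2) * (X - 1)^2 * (2*X - 1) * avoiderGF ({![0,1,3,2], ![0,3,1,2], ![1,2,3,0]} : Set (Fin 4 → Fin 4)) =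
      X * (X - 1)^2 * (2*X - 1) * catalanGF + (3*X^4 - 7*X^3 + 9*X^2 - 5*X + 1) := by
  rw [avoiderGF_eq]
  exact mul_labelGF_root
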